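/- arXiv:0905.4367 — 4 statements merged into one kernel-verified Lean document; each statement's English description precedes it below -/
import Mathlib

section
/- Let A be a commutative ring and let I, J be ideals of A that are comaximal, i.e. I + J = A. Then there is an isomorphism of A-modules Hom_A(I·J, A/(I·J)) ≅ Hom_A(I, A/I) × Hom_A(J, A/J). -/
/-!
Write `1 = e + f` with `e ∈ I` and `f ∈ J`. By the Chinese remainder theorem
`A/(IJ) ≅ A/I × A/J`, so `Hom(IJ, A/(IJ)) ≅ Hom(IJ, A/I) × Hom(IJ, A/J)`. Restriction
`Hom(I, A/I) → Hom(IJ, A/I)` is bijective: `f` acts as the identity on `A/I` and multiplies `I`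
into `IJ`, so `g ↦ (x ↦ g (f x))` is its inverse (`homRestrictEquiv`). The same holds for `J`,
with `e` in place of `f`.
-/

/-- Let `K ≤ I` be ideals. If `f ≡ 1 mod I` and `f I ⊆ K`, then restriction of linear maps
`Hom(I, A/I) → Hom(K, A/I)` is an isomorphism, with inverse `g ↦ (x ↦ g (f x))`. -/
def homRestrictEquiv {A : Type*} [CommRing A] {I K : Ideal A} (hK : K ≤ I) (f : A)
    (hf : 1 - f ∈ I) (hfK : ∀ x ∈ I, f * x ∈ K) :
    (I →ₗ[A] A ⧸ I) ≃ₗ[A] (K →ₗ[A] A ⧸ I) :=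
  have smul_eq : ∀ y : A ⧸ I, f • y = y := fun y => by
    obtain ⟨a, rfl⟩ := Ideal.Quotient.mk_surjective y
    change Ideal.Quotient.mk I (f * a) = Ideal.Quotient.mk I a
    rw [eq_comm, Ideal.Quotient.eq]
    have := I.mul_mem_right a hf
    rwa [sub_mul, one_mul] at this
  LinearEquiv.ofLinearMap
    (LinearMap.lcomp A (A ⧸ I) (Submodule.inclusion hK))
    (LinearMap.lcomp A (A ⧸ I) ((LinearMap.mulLeft A f).restrict hfK))
    (by
      ext g x
      change g ⟨f * x, _⟩ = g x
      rw [← smul_eq (g x), ← map_smul]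
      rfl)
    (by
      ext g x
      change g ⟨f * x, _⟩ = g x
      rw [← smul_eq (g x), ← map_smul]
      rfl)

/-- The Chinese remainder isomorphism `A/(IJ) ≅ A/I × A/J`, as a map of `A`-modules. -/
noncomputable def quotientMulLinearEquiv {A : Type*} [CommRing A] (I J : Ideal A)
    (h : IsCoprime I J) : (A ⧸ (I * J)) ≃ₗ[A] ((A ⧸ I) × (A ⧸ J)) :=
  { (Ideal.quotientMulEquivQuotientProd I J h).toAddEquiv with
    map_smul' := fun r x => by
      obtain ⟨a, rfl⟩ := Ideal.Quotient.mk_surjective x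
      rfl }

/-- If `I` and `J` are comaximal ideals of a commutative ring `A`, then
`Hom_A(I·J, A/(I·J)) ≅ Hom_A(I, A/I) × Hom_A(J, A/J)` as `A`-modules. -/
theorem hom_mul_ideal_quotient_equiv_prod
    {A : Type*} [CommRing A] (I J : Ideal A) (h : I ⊔ J = ⊤) :
    Nonempty (((I * J : Ideal A) →ₗ[A] A ⧸ (I * J)) ≃ₗ[A]
      ((I →ₗ[A] A ⧸ I) × (J →ₗ[A] A ⧸ J))) := by
  have hc : IsCoprime I J := Ideal.isCoprime_iff_sup_eq.mpr h
  obtain ⟨e, he, f, hf, hef⟩ := Ideal.isCoprime_iff_exists.mp hc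
  have eI := homRestrictEquiv (I := I) (K := I * J) Ideal.mul_le_left f
    (by rwa [← hef, add_sub_cancel_right])
    (fun x hx => by rw [mul_comm f x]; exact Ideal.mul_mem_mul hx hf)
  have eJ := homRestrictEquiv (I := J) (K := I * J) Ideal.mul_le_right e
    (by rwa [← hef, add_sub_cancel_left])
    (fun x hx => Ideal.mul_mem_mul he hx)
  exact ⟨(LinearEquiv.congrRight (quotientMulLinearEquiv I J hc)).trans
    ((LinearMap.prodEquiv A).symm.trans (eI.symm.prodCongr eJ.symm))⟩
end

section
/- Let K be a field, d a natural number, and M a d × d matrix over K, inducing the linear endomorphism f = M·(−) of K^d. Then in the polynomial ring K[q] one has ∑_{k=0}^{d} trace(Λ^k f) · q^k = det(1 + q·M), where Λ^k f denotes the endomorphism induced by f on the k-th exterior power of K^d, and det(1 + q·M) is the determinant of the matrix 1 + q·M over K[q]. Equivalently, the trace of the endomorphism induced by f on the full exterior algebra, graded by exterior degree, equals q^d · χ(−1/q) where χ is the characteristic polynomial det(M − X·1). -/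
/-!
In the basis of `⋀^k K^d` formed by the wedges of `k` standard basis vectors, the diagonal entry of
`Λ^k f` at a `k`-element set `s` is the principal minor of `M` on `s`. Hence `trace (Λ^k f)` is the
sum of the `k × k` principal minors of `M` (`trace_exteriorPower_map_toLin'`), which is also the
`k`-th coefficient of `det (1 + q·M)` (`Matrix.coeff_det_one_add_X_smul_eq_sum_minors`). For `k > d`
there are no principal minors, so the generating polynomial stops at degree `d`.
-/

open Polynomial

/-- `exteriorPower.map` is the restriction of `ExteriorAlgebra.map` to the `k`-th exterior power;
in particular the latter preserves `⋀^k E`. -/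
lemma coe_exteriorPower_map {R E : Type*} [CommRing R] [AddCommGroup E] [Module R E]
    (f : E →ₗ[R] E) (k : ℕ) (x : ⋀[R]^k E) :
    (exteriorPower.map k f x : ExteriorAlgebra R E) = ExteriorAlgebra.map f x := by
  have key : (⋀[R]^k E).subtype ∘ₗ exteriorPower.map k f =
      (ExteriorAlgebra.map f).toLinearMap ∘ₗ (⋀[R]^k E).subtype := by
    apply exteriorPower.linearMap_ext
    ext v
    simp [ExteriorAlgebra.map_apply_ιMulti, Function.comp_def]
  exact LinearMap.congr_fun key x

lemma trace_exteriorPower_map_toLin' {R : Type*} [CommRing R] {d : ℕ}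
    (M : Matrix (Fin d) (Fin d) R) (k : ℕ) :
    LinearMap.trace R (⋀[R]^k (Fin d → R)) (exteriorPower.map k (Matrix.toLin' M)) =
      ∑ s ∈ Finset.univ.powersetCard k,
        (M.submatrix (Subtype.val : s → Fin d) (Subtype.val : s → Fin d)).det := by
  rw [LinearMap.trace_eq_matrix_trace R ((Pi.basisFun R (Fin d)).exteriorPower k), Matrix.trace]
  rw [Finset.sum_subtype (F := inferInstance) (p := (· ∈ Set.powersetCard (Fin d) k))
    (Finset.univ.powersetCard k) (by simp [Finset.mem_powersetCard])
    (fun s => (M.submatrix (Subtype.val : s → Fin d) (Subtype.val : s → Fin d)).det)]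
  refine Finset.sum_congr rfl fun s _ => ?_
  rw [Matrix.diag_apply, LinearMap.toMatrix_apply, exteriorPower.basis_apply,
    exteriorPower.map_apply_ιMulti_family, exteriorPower.basis_repr_apply,
    exteriorPower.ιMulti_family, exteriorPower.ιMultiDual_apply_ιMulti,
    ← Matrix.det_submatrix_equiv_self (Set.powersetCard.orderIsoOfFin s).toEquiv,
    ← Matrix.det_transpose]
  congr 1
  ext i j
  simp [Set.powersetCard.ofFinEmbEquiv_symm_apply, Matrix.col_apply]
  rfl

/-- For a `d × d` matrix `M` over a field `K` inducing `f` on `K^d`, the endomorphism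
`ExteriorAlgebra.map f` preserves each exterior power `⋀^k K^d`, and the generating
polynomial of the traces of the induced endomorphisms `Λ^k f` satisfies
`∑_{k=0}^d trace(Λ^k f) qᵏ = det(1 + q·M)` in `K[q]`. -/
theorem trace_exteriorPower_generating_eq_det_one_add_smul
    {K : Type*} [Field K] (d : ℕ) (M : Matrix (Fin d) (Fin d) K) :
    ∃ h : ∀ k : ℕ, ∀ x ∈ (⋀[K]^k (Fin d → K)),
        ExteriorAlgebra.map (Matrix.toLin' M) x ∈ (⋀[K]^k (Fin d → K)),
      ∑ k ∈ Finset.range (d + 1),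
          Polynomial.C (LinearMap.trace K (⋀[K]^k (Fin d → K))
            ((ExteriorAlgebra.map (Matrix.toLin' M)).toLinearMap.restrict (h k)))
            * Polynomial.X ^ k
        = ((1 + (Polynomial.X : Polynomial K) • M.map Polynomial.C :
            Matrix (Fin d) (Fin d) (Polynomial K))).det := by
  refine ⟨fun k x hx => ?_, ?_⟩
  · rw [← coe_exteriorPower_map _ k ⟨x, hx⟩]
    exact Subtype.prop _
  · ext n
    rw [Matrix.coeff_det_one_add_X_smul_eq_sum_minors, ← trace_exteriorPower_map_toLin']
    simp only [finsetSum_coeff, coeff_C_mul_X_pow, Finset.sum_ite_eq, Finset.mem_range]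
    split_ifs with hn
    · congr 1
      refine LinearMap.ext fun x => Subtype.ext ?_
      exact (coe_exteriorPower_map _ n x).symm
    · rw [trace_exteriorPower_map_toLin', Finset.powersetCard_eq_empty.mpr (by simp; omega),
        Finset.sum_empty]
end

section
/- In the polynomial ring ℂ[X, Y], let ε₁, ε₂ be nonzero complex numbers and let φ be the ℂ-algebra automorphism determined by φ(X) = ε₁·X and φ(Y) = ε₂·Y. Let n ≥ 2, let α₁, …, α_{n−1} be complex numbers, and set I_α = ⟨Y + α₁X + ⋯ + α_{n−1}X^{n−1}, X^n⟩. Then φ(I_α) = I_α if and only if for every index i ∈ {1, …, n−1} with αᵢ ≠ 0 one has ε₂ = ε₁^i. -/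
/-!
Put `f = Y + ∑ αᵢ Xⁱ`. If `ε₂ = ε₁ⁱ` whenever `αᵢ ≠ 0`, then `φ(f) = ε₂ f` and `φ(Xⁿ) = ε₁ⁿ Xⁿ`,
so `φ` rescales the generators of `I_α` by units. Conversely, the substitution `X ↦ T`,
`Y ↦ -∑ αᵢ Tⁱ` maps `I_α` into `(Tⁿ) ⊆ ℂ[T]`, and it maps `φ(f)` to `∑ αᵢ (ε₁ⁱ - ε₂) Tⁱ`.
If `φ(f) ∈ I_α`, all coefficients of this polynomial in degree `< n` vanish.
-/

/-- For the automorphism `φ` of `ℂ[X,Y]` with `φ(X) = ε₁X`, `φ(Y) = ε₂Y` (`ε₁, ε₂ ≠ 0`),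
the curvilinear ideal `I_α = ⟨Y + ∑ αᵢ Xⁱ, Xⁿ⟩` satisfies `φ(I_α) = I_α`
iff `ε₂ = ε₁ⁱ` for every `i ∈ {1,…,n-1}` with `αᵢ ≠ 0`. -/
theorem map_curvilinear_ideal_eq_self_iff
    (ε₁ ε₂ : ℂ) (hε₁ : ε₁ ≠ 0) (hε₂ : ε₂ ≠ 0) (n : ℕ) (hn : 2 ≤ n) (α : ℕ → ℂ) :
    Ideal.map
      (MvPolynomial.aeval ![ε₁ • MvPolynomial.X 0, ε₂ • MvPolynomial.X 1] :
        MvPolynomial (Fin 2) ℂ →ₐ[ℂ] MvPolynomial (Fin 2) ℂ)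
      (Ideal.span {MvPolynomial.X 1 + ∑ i ∈ Finset.Icc 1 (n - 1),
          MvPolynomial.C (α i) * MvPolynomial.X 0 ^ i, MvPolynomial.X 0 ^ n})
      = Ideal.span {MvPolynomial.X 1 + ∑ i ∈ Finset.Icc 1 (n - 1),
          MvPolynomial.C (α i) * MvPolynomial.X 0 ^ i, MvPolynomial.X 0 ^ n}
    ↔ ∀ i ∈ Finset.Icc 1 (n - 1), α i ≠ 0 → ε₂ = ε₁ ^ i := by
  have hφf : (MvPolynomial.aeval ![ε₁ • MvPolynomial.X 0, ε₂ • MvPolynomial.X 1] :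
        MvPolynomial (Fin 2) ℂ →ₐ[ℂ] MvPolynomial (Fin 2) ℂ)
      (MvPolynomial.X 1 + ∑ i ∈ Finset.Icc 1 (n - 1),
          MvPolynomial.C (α i) * MvPolynomial.X 0 ^ i)
      = MvPolynomial.C ε₂ * MvPolynomial.X 1 + ∑ i ∈ Finset.Icc 1 (n - 1),
          MvPolynomial.C (α i * ε₁ ^ i) * MvPolynomial.X 0 ^ i := by
    simp [MvPolynomial.smul_eq_C_mul, MvPolynomial.algebraMap_eq, mul_pow, mul_assoc]
  rw [Ideal.map_span, Set.image_pair, hφf]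
  constructor
  · intro h i hi hαi
    set ψ : MvPolynomial (Fin 2) ℂ →ₐ[ℂ] Polynomial ℂ := MvPolynomial.aeval
      ![Polynomial.X, -∑ i ∈ Finset.Icc 1 (n - 1), Polynomial.C (α i) * Polynomial.X ^ i] with hψ
    have hmem := Ideal.mem_map_of_mem ψ (h.le (Ideal.subset_span (Set.mem_insert _ _)))
    rw [Ideal.map_span, Set.image_pair] at hmem
    have hf : ψ (MvPolynomial.X 1 + ∑ i ∈ Finset.Icc 1 (n - 1),
        MvPolynomial.C (α i) * MvPolynomial.X 0 ^ i) = 0 := by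
      simp [hψ, Polynomial.algebraMap_eq]
    have hX : ψ (MvPolynomial.X 0 ^ n) = Polynomial.X ^ n := by simp [hψ]
    have hg : ψ (MvPolynomial.C ε₂ * MvPolynomial.X 1 + ∑ i ∈ Finset.Icc 1 (n - 1),
        MvPolynomial.C (α i * ε₁ ^ i) * MvPolynomial.X 0 ^ i)
        = ∑ i ∈ Finset.Icc 1 (n - 1),
          Polynomial.C (α i * (ε₁ ^ i - ε₂)) * Polynomial.X ^ i := by
      simp only [hψ, map_add, map_mul, map_sum, map_pow, MvPolynomial.aeval_X,
        MvPolynomial.algHom_C, Polynomial.algebraMap_eq, Matrix.cons_val_zero,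
        Matrix.cons_val_one, mul_neg, Finset.mul_sum, ← Finset.sum_neg_distrib,
        ← Finset.sum_add_distrib, map_sub]
      exact Finset.sum_congr rfl fun j _ => by ring
    rw [hf, hX, hg, Ideal.span_insert_zero, Ideal.mem_span_singleton,
      Polynomial.X_pow_dvd_iff] at hmem
    have hc := hmem i (by have := Finset.mem_Icc.1 hi; omega)
    simp only [Polynomial.finsetSum_coeff, Polynomial.coeff_C_mul_X_pow,
      Finset.sum_ite_eq, if_pos hi, mul_eq_zero, hαi, false_or] at hc
    exact (sub_eq_zero.1 hc).symm
  · intro h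
    have hf : (MvPolynomial.C ε₂ * MvPolynomial.X 1 + ∑ i ∈ Finset.Icc 1 (n - 1),
          MvPolynomial.C (α i * ε₁ ^ i) * MvPolynomial.X 0 ^ i : MvPolynomial (Fin 2) ℂ)
        = MvPolynomial.C ε₂ * (MvPolynomial.X 1 + ∑ i ∈ Finset.Icc 1 (n - 1),
          MvPolynomial.C (α i) * MvPolynomial.X 0 ^ i) := by
      rw [mul_add, Finset.mul_sum]
      congr 1
      refine Finset.sum_congr rfl fun i hi => ?_
      rw [← mul_assoc, ← map_mul]
      by_cases hαi : α i = 0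
      · simp [hαi]
      · rw [h i hi hαi, mul_comm (α i)]
    have hX : (MvPolynomial.aeval ![ε₁ • MvPolynomial.X 0, ε₂ • MvPolynomial.X 1] :
        MvPolynomial (Fin 2) ℂ →ₐ[ℂ] MvPolynomial (Fin 2) ℂ) (MvPolynomial.X 0 ^ n)
        = MvPolynomial.C (ε₁ ^ n) * MvPolynomial.X 0 ^ n := by
      simp [MvPolynomial.smul_eq_C_mul, mul_pow]
    rw [hf, hX, Ideal.span_insert,
      Ideal.span_singleton_mul_left_unit ((isUnit_iff_ne_zero.2 hε₂).map MvPolynomial.C),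
      Ideal.span_singleton_mul_left_unit
        ((isUnit_iff_ne_zero.2 (pow_ne_zero n hε₁)).map MvPolynomial.C),
      ← Ideal.span_insert]
end

section
/- In the polynomial ring ℂ[X, Y], let ε₁, ε₂ be nonzero complex numbers and let φ be the ℂ-algebra automorphism determined by φ(X) = ε₁·X and φ(Y) = ε₂·Y. Let λ, μ be nonzero complex numbers and set I = ⟨λX + μY, X², Y²⟩. Then φ(I) = I if and only if ε₁ = ε₂. -/
/-!
The homomorphism `ℂ[X,Y] → ℂ[ε]` to the dual numbers with `X ↦ μ ε`, `Y ↦ -λ ε` (the tangent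
vector along the line `λX + μY = 0`) kills `I`. If `φ(I) = I`, it therefore kills
`φ(λX + μY) = λε₁X + μ ε₂Y`, which is sent to `λμ(ε₁ - ε₂) ε`; hence `ε₁ = ε₂`. Conversely, if
`ε₁ = ε₂`, then `φ` multiplies each generator of `I` by a nonzero scalar.
-/

/-- For the automorphism `φ` of `ℂ[X,Y]` with `φ(X) = ε₁X`, `φ(Y) = ε₂Y` (`ε₁, ε₂ ≠ 0`)
and `λ, μ ≠ 0`, the length-two curvilinear ideal `I = ⟨λX + μY, X², Y²⟩` satisfies
`φ(I) = I` iff `ε₁ = ε₂`. -/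
theorem map_length_two_curvilinear_ideal_eq_self_iff
    (ε₁ ε₂ : ℂ) (hε₁ : ε₁ ≠ 0) (hε₂ : ε₂ ≠ 0) (lam mu : ℂ) (hlam : lam ≠ 0) (hmu : mu ≠ 0) :
    Ideal.map
      (MvPolynomial.aeval ![ε₁ • MvPolynomial.X 0, ε₂ • MvPolynomial.X 1] :
        MvPolynomial (Fin 2) ℂ →ₐ[ℂ] MvPolynomial (Fin 2) ℂ)
      (Ideal.span {MvPolynomial.C lam * MvPolynomial.X 0 + MvPolynomial.C mu * MvPolynomial.X 1,
        MvPolynomial.X 0 ^ 2, MvPolynomial.X 1 ^ 2})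
      = Ideal.span {MvPolynomial.C lam * MvPolynomial.X 0 + MvPolynomial.C mu * MvPolynomial.X 1,
        MvPolynomial.X 0 ^ 2, MvPolynomial.X 1 ^ 2}
    ↔ ε₁ = ε₂ := by
  rw [Ideal.map_span, Set.image_insert_eq, Set.image_pair]
  simp only [map_add, map_mul, map_pow, MvPolynomial.aeval_X, MvPolynomial.algHom_C,
    MvPolynomial.algebraMap_eq, Matrix.cons_val_zero, Matrix.cons_val_one,
    MvPolynomial.smul_eq_C_mul]
  constructor
  · intro h
    let ψ : MvPolynomial (Fin 2) ℂ →ₐ[ℂ] DualNumber ℂ :=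
      MvPolynomial.aeval ![mu • DualNumber.eps, (-lam) • DualNumber.eps]
    have hI : Ideal.span {MvPolynomial.C lam * MvPolynomial.X 0
        + MvPolynomial.C mu * MvPolynomial.X 1,
        MvPolynomial.X 0 ^ 2, MvPolynomial.X 1 ^ 2} ≤ RingHom.ker ψ := by
      rw [Ideal.span_le]
      rintro p (rfl | rfl | rfl)
      · ext <;> simp [ψ, TrivSqZeroExt.algebraMap_eq_inl, mul_comm]
      · simp [ψ, RingHom.mem_ker, pow_two]
      · simp [ψ, RingHom.mem_ker, pow_two]
    have hmem := hI (h.le (Ideal.subset_span (Set.mem_insert _ _)))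
    have key := congrArg TrivSqZeroExt.snd ((RingHom.mem_ker).1 hmem)
    simp [ψ, TrivSqZeroExt.algebraMap_eq_inl] at key
    have h0 : (lam * mu) * (ε₁ - ε₂) = 0 := by linear_combination key
    exact sub_eq_zero.1 ((mul_eq_zero.1 h0).resolve_left (mul_ne_zero hlam hmu))
  · rintro rfl
    have hC : (MvPolynomial.C ε₁⁻¹ * MvPolynomial.C ε₁ : MvPolynomial (Fin 2) ℂ) = 1 := by
      rw [← MvPolynomial.C_mul, inv_mul_cancel₀ hε₁, MvPolynomial.C_1]
    apply le_antisymm <;> rw [Ideal.span_le]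
    · rintro p (rfl | rfl | rfl)
      · rw [show ∀ a b c x y : MvPolynomial (Fin 2) ℂ,
          a * (c * x) + b * (c * y) = c * (a * x + b * y) by intros; ring]
        exact Ideal.mul_mem_left _ _ (Ideal.subset_span (by simp))
      · rw [mul_pow]
        exact Ideal.mul_mem_left _ _ (Ideal.subset_span (by simp))
      · rw [mul_pow]
        exact Ideal.mul_mem_left _ _ (Ideal.subset_span (by simp))
    · rintro p (rfl | rfl | rfl)
      · rw [show MvPolynomial.C lam * MvPolynomial.X 0 + MvPolynomial.C mu * MvPolynomial.X 1
          = MvPolynomial.C ε₁⁻¹ * (MvPolynomial.C lam * (MvPolynomial.C ε₁ * MvPolynomial.X 0)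
            + MvPolynomial.C mu * (MvPolynomial.C ε₁ * MvPolynomial.X (1 : Fin 2))) by
          linear_combination (-(MvPolynomial.C lam * MvPolynomial.X 0
            + MvPolynomial.C mu * MvPolynomial.X 1)) * hC]
        exact Ideal.mul_mem_left _ _ (Ideal.subset_span (by simp))
      · rw [show MvPolynomial.X 0 ^ 2 = MvPolynomial.C ε₁⁻¹ ^ 2
          * (MvPolynomial.C ε₁ * MvPolynomial.X (0 : Fin 2)) ^ 2 by
          rw [← mul_pow, ← mul_assoc, hC, one_mul]]
        exact Ideal.mul_mem_left _ _ (Ideal.subset_span (by simp))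
      · rw [show MvPolynomial.X 1 ^ 2 = MvPolynomial.C ε₁⁻¹ ^ 2
          * (MvPolynomial.C ε₁ * MvPolynomial.X (1 : Fin 2)) ^ 2 by
          rw [← mul_pow, ← mul_assoc, hC, one_mul]]
        exact Ideal.mul_mem_left _ _ (Ideal.subset_span (by simp))
end
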